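/- Let k be a field of characteristic 3 and a1, a3 ∈ k with a1 ≠ 0, a3 ≠ 0 and a3 ≠ −1. Then the Weierstrass curves E1 : v² = u³ + a3·(a3 + 1)·u² + 2·a3²·a1 and E2 : v² = u³ + a3·(a3 + 1)·u² + a1·a3⁵ are nonsingular; the j-invariant of E1 equals a3·(a3 + 1)³ / a1, the j-invariant of E2 equals 2·(a3 + 1)³ / (a1·a3²), and the quotient j(E1)/j(E2) equals −a3³. -/

import Mathlib

/-!
In characteristic 3, a curve `v² = u³ + a·u² + b` has discriminant `-a³b`, so it is nonsingular
as soon as `a, b ≠ 0`, and its `j`-invariant is then `-a³ / b`. Both curves are of this form with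
`a = a3(a3 + 1)`; the three values of the theorem follow by field arithmetic, using `2 = -1`.
-/

/-- Over a field of characteristic 3, `v² = u³ + a·u² + b` with `a, b ≠ 0` is an elliptic curve
with `j = -a³ / b`. -/
theorem isElliptic_and_j_of_char_three {k : Type*} [Field k] [CharP k 3] {a b : k}
    (ha : a ≠ 0) (hb : b ≠ 0) {E : WeierstrassCurve k} (hE : E = ⟨0, a, 0, 0, b⟩) :
    ∃ h : E.IsElliptic, @WeierstrassCurve.j k _ E h = -a ^ 3 / b := by
  have : E.IsCharThreeJNeZeroNF := by subst hE; exact ⟨rfl, rfl, rfl⟩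
  have h2 : E.a₂ = a := by rw [hE]
  have h6 : E.a₆ = b := by rw [hE]
  have hΔ : E.Δ = -a ^ 3 * b := by
    rw [E.Δ_of_isCharThreeJNeZeroNF_of_char_three, h2, h6]
  have h : E.IsElliptic := by
    rw [WeierstrassCurve.isElliptic_iff, hΔ]
    exact (mul_ne_zero (neg_ne_zero.mpr (pow_ne_zero 3 ha)) hb).isUnit
  exact ⟨h, by rw [E.j_of_isCharThreeJNeZeroNF_of_char_three, h2, h6]⟩

theorem stmt_13 (k : Type*) [Field k] [CharP k 3]
    (a1 a3 : k) (ha1 : a1 ≠ 0) (ha3 : a3 ≠ 0) (ha3' : a3 ≠ -1)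
    (E1 E2 : WeierstrassCurve k)
    (hE1 : E1 = ⟨0, a3 * (a3 + 1), 0, 0, 2 * a3 ^ 2 * a1⟩)
    (hE2 : E2 = ⟨0, a3 * (a3 + 1), 0, 0, a1 * a3 ^ 5⟩) :
    ∃ (h1 : E1.IsElliptic) (h2 : E2.IsElliptic),
      @WeierstrassCurve.j k _ E1 h1 = a3 * (a3 + 1) ^ 3 / a1 ∧
      @WeierstrassCurve.j k _ E2 h2 = 2 * (a3 + 1) ^ 3 / (a1 * a3 ^ 2) ∧
      @WeierstrassCurve.j k _ E1 h1 / @WeierstrassCurve.j k _ E2 h2 = -a3 ^ 3 := by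
  have h3 : (3 : k) = 0 := by exact_mod_cast CharP.cast_eq_zero k 3
  have h21 : (2 : k) = -1 := by linear_combination h3
  have hs : a3 + 1 ≠ 0 := fun h => ha3' (eq_neg_of_add_eq_zero_left h)
  have ha : a3 * (a3 + 1) ≠ 0 := mul_ne_zero ha3 hs
  rw [h21] at hE1 ⊢
  obtain ⟨h1, hj1⟩ := isElliptic_and_j_of_char_three ha (by simp [ha1, ha3]) hE1
  obtain ⟨h2, hj2⟩ := isElliptic_and_j_of_char_three ha (by simp [ha1, ha3]) hE2
  refine ⟨h1, h2, ?_, ?_, ?_⟩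
  · rw [hj1]; field_simp
  · rw [hj2]; field_simp
  · rw [hj1, hj2]; field_simp
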